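/- There is a universal constant C > 0 with the following property. Let 𝒢 = (G_1, …, G_ℓ) be a connected temporal graph with n vertices and orbit number r = |𝒢/Aut(𝒢)|, let S be an orbit of Aut(𝒢), let h ≤ |S|, let u ∈ S, and let t be a time step with t + C·(min{h·n/|S|, h·r} + r) ≤ ℓ. Then there exists a set X ⊆ S with |X| = h such that for every vertex u' ∈ X there is a temporal walk starting at u at time step t and ending at u' at a time step t' with t' − t ≤ C·(min{h·n/|S|, h·r} + r). -/

import Mathlib

/-!
Fix the start vertex `u` and let `A k` be the set of vertices reachable from `u` within `k` steps.
Two growth mechanisms combine.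

* As every snapshot is connected, `A k` gains a vertex at each step until it is all of `V`
  (`card_reachFrom_grow`). Applied to the quotient by `Aut(𝒢)`, the same argument shows that any
  vertex reaches every orbit within `r` steps (`exists_reach_orbit`).
* "`v` reaches `w` within `r` steps" is an `Aut(𝒢)`-invariant relation, so between two orbits `T`
  and `S` it is biregular, and of positive degree by the previous point. Double counting gives that
  the density of a set `B` in `T` is at most the density in `S` of the set reached from `B` within
  `r` steps (`density_le`). Summing over one of the two orbits compares densities in `S` with
  densities in `V` (`density_orbit_le_total`, `density_total_le_orbit`).

For the bound `h * n / |S|`: after that many steps `A` has density at least `h / |S|` in `V`, and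
`r` steps later it has this density in `S`. For the bound `h * r`: if `A` has density `d < 1` in `S`,
then `r` steps later it has density at least `d` in `V`, one further step makes this strict, and
another `r` steps transfer the strict inequality to `S`. Hence `S` gains a vertex
every `2 * r + 1` steps.
-/

open scoped BigOperators

/-- A temporal graph on a finite vertex set `V`: a lifetime `ℓ` together with a
snapshot graph `snap t` for every time step `t` (only `t ∈ [1, ℓ]` is relevant). -/
structure TemporalGraph (V : Type) [Fintype V] where
  lifetime : ℕ
  snap : ℕ → SimpleGraph V

namespace TemporalGraph

variable {V : Type} [Fintype V]

/-- A temporal graph is connected if every snapshot within its lifetime is connected. -/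
def IsConnectedTG (𝒢 : TemporalGraph V) : Prop :=
  ∀ t, 1 ≤ t → t ≤ 𝒢.lifetime → (𝒢.snap t).Connected

/-- `W` is a temporal walk starting at time step `t` and ending at time step `t'`:
at each time step `s` with `t ≤ s < t'` it either waits or traverses an edge of
the snapshot `G_s`. -/
def IsWalk (𝒢 : TemporalGraph V) (W : ℕ → V) (t t' : ℕ) : Prop :=
  1 ≤ t ∧ t ≤ t' ∧ t' ≤ 𝒢.lifetime ∧
    ∀ s, t ≤ s → s < t' → W (s + 1) = W s ∨ (𝒢.snap s).Adj (W s) (W (s + 1))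

/-- The set of vertices visited by `W` between time steps `t` and `t'`. -/
def visited (W : ℕ → V) (t t' : ℕ) : Set V := W '' Set.Icc t t'

/-- `σ` is an automorphism of the temporal graph `𝒢`, i.e. an automorphism of
every snapshot within the lifetime. -/
def IsAut (𝒢 : TemporalGraph V) (σ : Equiv.Perm V) : Prop :=
  ∀ t, 1 ≤ t → t ≤ 𝒢.lifetime →
    ∀ u v : V, (𝒢.snap t).Adj u v ↔ (𝒢.snap t).Adj (σ u) (σ v)

/-- The orbit of a vertex `u` under `Aut(𝒢)`. -/
def orbit (𝒢 : TemporalGraph V) (u : V) : Set V :=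
  {v | ∃ σ : Equiv.Perm V, 𝒢.IsAut σ ∧ σ u = v}

/-- `S` is an orbit of `Aut(𝒢)`. -/
def IsOrbit (𝒢 : TemporalGraph V) (S : Set V) : Prop :=
  ∃ u : V, S = 𝒢.orbit u

/-- The orbit number of `𝒢`: the number of orbits of `Aut(𝒢)` on `V`. -/
noncomputable def orbitNumber (𝒢 : TemporalGraph V) : ℕ :=
  (Set.range 𝒢.orbit).ncard

/-- Vertices reachable from `u` by a temporal walk starting at time step `t`
and ending at a time step at most `t'`. -/
def reachSet (𝒢 : TemporalGraph V) (u : V) (t t' : ℕ) : Set V :=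
  {v | ∃ t'' ≤ t', ∃ W : ℕ → V, 𝒢.IsWalk W t t'' ∧ W t = u ∧ W t'' = v}

/-- `W` is a temporal walk that only traverses orbit boundary edges
(edges between two different orbits); waiting is allowed. -/
def IsBoundaryWalk (𝒢 : TemporalGraph V) (W : ℕ → V) (t t' : ℕ) : Prop :=
  1 ≤ t ∧ t ≤ t' ∧ t' ≤ 𝒢.lifetime ∧
    ∀ s, t ≤ s → s < t' → W (s + 1) = W s ∨
      ((𝒢.snap s).Adj (W s) (W (s + 1)) ∧ 𝒢.orbit (W s) ≠ 𝒢.orbit (W (s + 1)))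

/-- The lane `L_{t,t'}(X)`: all vertices reachable from some vertex of `X` by a
temporal walk starting at time step `t`, ending at a time step at most `t'`,
that only uses orbit boundary edges. -/
def lane (𝒢 : TemporalGraph V) (X : Set V) (t t' : ℕ) : Set V :=
  {v | ∃ u ∈ X, ∃ t'' ≤ t', ∃ W : ℕ → V, 𝒢.IsBoundaryWalk W t t'' ∧ W t = u ∧ W t'' = v}

end TemporalGraph

namespace TemporalGraph

variable {V : Type} [Fintype V]

/-! ### Automorphisms and orbits -/

lemma IsAut.inv {𝒢 : TemporalGraph V} {σ : Equiv.Perm V} (hσ : 𝒢.IsAut σ) : 𝒢.IsAut σ⁻¹ := by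
  intro t h1 h2 u v
  rw [hσ t h1 h2 (σ⁻¹ u) (σ⁻¹ v)]
  simp

lemma mem_orbit_self (𝒢 : TemporalGraph V) (v : V) : v ∈ 𝒢.orbit v :=
  ⟨1, fun _ _ _ _ _ => by simp, rfl⟩

lemma mem_orbit_symm {𝒢 : TemporalGraph V} {v w : V} (h : v ∈ 𝒢.orbit w) : w ∈ 𝒢.orbit v := by
  obtain ⟨σ, hσ, rfl⟩ := h
  exact ⟨σ⁻¹, hσ.inv, by simp⟩

lemma mem_orbit_trans {𝒢 : TemporalGraph V} {u v w : V} (h : u ∈ 𝒢.orbit v)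
    (h' : v ∈ 𝒢.orbit w) : u ∈ 𝒢.orbit w := by
  obtain ⟨σ, hσ, rfl⟩ := h
  obtain ⟨τ, hτ, rfl⟩ := h'
  refine ⟨σ * τ, fun t h1 h2 a b => ?_, rfl⟩
  rw [hτ t h1 h2 a b, hσ t h1 h2 (τ a) (τ b)]
  rfl

lemma orbit_eq_iff {𝒢 : TemporalGraph V} {v w : V} : 𝒢.orbit v = 𝒢.orbit w ↔ v ∈ 𝒢.orbit w := by
  refine ⟨fun h => h ▸ mem_orbit_self 𝒢 v, fun h => Set.ext fun x => ?_⟩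
  exact ⟨fun hx => mem_orbit_trans hx h, fun hx => mem_orbit_trans hx (mem_orbit_symm h)⟩

/-! ### Reachability -/

/-- `𝒢.Rch s k v w`: some temporal walk leads from `v` at time step `s` to `w` at time step
`s + k`. The lifetime is ignored here; it enters as a hypothesis of the lemmas. -/
def Rch (𝒢 : TemporalGraph V) (s : ℕ) : ℕ → V → V → Prop
  | 0, v, w => v = w
  | k + 1, v, w => ∃ x, Rch 𝒢 s k v x ∧ (w = x ∨ (𝒢.snap (s + k)).Adj x w)

lemma Rch.trans {𝒢 : TemporalGraph V} {s j : ℕ} {u v : V} (h : 𝒢.Rch s j u v) :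
    ∀ {k : ℕ} {w : V}, 𝒢.Rch (s + j) k v w → 𝒢.Rch s (j + k) u w
  | 0, _, h' => by
    cases h'
    exact h
  | k + 1, w, ⟨x, hx, hxw⟩ => ⟨x, h.trans hx, by rwa [Nat.add_assoc] at hxw⟩

lemma Rch.map {𝒢 : TemporalGraph V} {σ : Equiv.Perm V} (hσ : 𝒢.IsAut σ) {s : ℕ} (hs : 1 ≤ s) :
    ∀ {k : ℕ} {v w : V}, s + k ≤ 𝒢.lifetime → 𝒢.Rch s k v w → 𝒢.Rch s k (σ v) (σ w)
  | 0, _, _, _, h => congrArg σ h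
  | k + 1, v, w, hk, ⟨x, hx, hxw⟩ => by
    refine ⟨σ x, Rch.map hσ hs (by omega) hx, ?_⟩
    rcases hxw with rfl | hxw
    · exact Or.inl rfl
    · exact Or.inr ((hσ (s + k) (by omega) (by omega) x w).1 hxw)

lemma Rch.exists_walk {𝒢 : TemporalGraph V} {s : ℕ} (hs : 1 ≤ s) :
    ∀ {k : ℕ} {v w : V}, s + k ≤ 𝒢.lifetime → 𝒢.Rch s k v w →
      ∃ W : ℕ → V, 𝒢.IsWalk W s (s + k) ∧ W s = v ∧ W (s + k) = w
  | 0, v, w, hk, h => ⟨fun _ => v, ⟨hs, le_rfl, hk, fun _ _ _ => Or.inl rfl⟩, rfl, h⟩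
  | k + 1, v, w, hk, ⟨x, hx, hxw⟩ => by
    obtain ⟨W, hW, hWv, hWx⟩ := Rch.exists_walk hs (by omega) hx
    refine ⟨fun i => if i ≤ s + k then W i else w, ⟨hs, by omega, hk, fun i hi hi' => ?_⟩,
      by simpa using hWv, by simp⟩
    by_cases hik : i < s + k
    · have h1 : i + 1 ≤ s + k := hik
      simpa [h1, hik.le] using hW.2.2.2 i hi hik
    · obtain rfl : i = s + k := by omega
      simpa [hWx] using hxw

lemma exists_adj_of_connected {V : Type} {G : SimpleGraph V} (hG : G.Connected) {P : Set V} {a b : V}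
    (ha : a ∈ P) (hb : b ∉ P) : ∃ x ∈ P, ∃ y ∉ P, G.Adj x y := by
  obtain ⟨p⟩ := hG.preconnected a b
  obtain ⟨d, -, h1, h2⟩ := p.exists_boundary_dart P ha hb
  exact ⟨d.fst, h1, d.snd, h2, d.adj⟩

/-- A nonempty finite set that gains an element at each step until it equals `U`
has at least `min |U| (k + 1)` elements after `k` steps. -/
lemma card_grow {β : Type} {f : ℕ → Finset β} {U : Finset β} {K : ℕ} (h0 : (f 0).Nonempty)
    (hm : ∀ k, f k ⊆ f (k + 1))
    (hs : ∀ k < K, f k ≠ U → f k ≠ f (k + 1)) :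
    ∀ k ≤ K, min U.card (k + 1) ≤ (f k).card := by
  intro k
  induction k with
  | zero => intro _; have := h0.card_pos; omega
  | succ k ih =>
    intro hk
    have h1 := ih (by omega)
    by_cases h : f k = U
    · have h2 := Finset.card_le_card (hm k)
      rw [h] at h2
      omega
    · have h2 := Finset.card_lt_card ((hm k).ssubset_of_ne (hs k (by omega) h))
      omega

open Classical in
/-- The vertices reachable from `A` by temporal walks from time step `s` to time step `s + k`. -/
noncomputable def reachFrom (𝒢 : TemporalGraph V) (A : Finset V) (s k : ℕ) : Finset V :=
  {w | ∃ v ∈ A, 𝒢.Rch s k v w}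

open Classical in
/-- The part of `A` that lies in the orbit of `y`. -/
noncomputable def inOrb (𝒢 : TemporalGraph V) (A : Finset V) (y : V) : Finset V :=
  {v ∈ A | v ∈ 𝒢.orbit y}

lemma mem_reachFrom {𝒢 : TemporalGraph V} {A : Finset V} {s k : ℕ} {w : V} :
    w ∈ 𝒢.reachFrom A s k ↔ ∃ v ∈ A, 𝒢.Rch s k v w := by
  simp [reachFrom]

lemma mem_inOrb {𝒢 : TemporalGraph V} {A : Finset V} {y v : V} :
    v ∈ 𝒢.inOrb A y ↔ v ∈ A ∧ v ∈ 𝒢.orbit y := by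
  simp [inOrb]

lemma inOrb_mono {𝒢 : TemporalGraph V} {A B : Finset V} (h : A ⊆ B) (y : V) :
    𝒢.inOrb A y ⊆ 𝒢.inOrb B y := fun v hv => by
  rw [mem_inOrb] at hv ⊢
  exact ⟨h hv.1, hv.2⟩

lemma reachFrom_mono_succ (𝒢 : TemporalGraph V) (A : Finset V) (s k : ℕ) :
    𝒢.reachFrom A s k ⊆ 𝒢.reachFrom A s (k + 1) := fun w hw => by
  rw [mem_reachFrom] at hw ⊢
  obtain ⟨v, hv, h⟩ := hw
  exact ⟨v, hv, w, h, Or.inl rfl⟩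

lemma reachFrom_reachFrom (𝒢 : TemporalGraph V) (A : Finset V) (s j k : ℕ) :
    𝒢.reachFrom (𝒢.reachFrom A s j) (s + j) k ⊆ 𝒢.reachFrom A s (j + k) := fun w hw => by
  simp only [mem_reachFrom] at hw ⊢
  obtain ⟨v, ⟨u, hu, huv⟩, h⟩ := hw
  exact ⟨u, hu, huv.trans h⟩

lemma reachFrom_ne_succ {𝒢 : TemporalGraph V} (hc : 𝒢.IsConnectedTG) {u : V} {s k : ℕ}
    (hs : 1 ≤ s) (hk : s + k ≤ 𝒢.lifetime) {B : Finset V}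
    (h : 𝒢.reachFrom B s k ≠ Finset.univ) (hu : u ∈ 𝒢.reachFrom B s k) :
    𝒢.reachFrom B s k ≠ 𝒢.reachFrom B s (k + 1) := by
  obtain ⟨b, hb⟩ : ∃ b, b ∉ 𝒢.reachFrom B s k := by
    by_contra! hall
    exact h (Finset.eq_univ_iff_forall.2 hall)
  obtain ⟨x, hx, y, hy, hxy⟩ := exists_adj_of_connected (hc (s + k) (by omega) hk)
    (P := (𝒢.reachFrom B s k : Set V)) (Finset.mem_coe.2 hu) (by simpa using hb)
  intro heq
  apply hy
  rw [Finset.mem_coe] at hx ⊢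
  rw [heq, mem_reachFrom]
  obtain ⟨v, hv, hvx⟩ := mem_reachFrom.1 hx
  exact ⟨v, hv, x, hvx, Or.inr hxy⟩

lemma rch_refl (𝒢 : TemporalGraph V) (s : ℕ) (v : V) : ∀ k, 𝒢.Rch s k v v
  | 0 => rfl
  | k + 1 => ⟨v, rch_refl 𝒢 s v k, Or.inl rfl⟩

lemma card_reachFrom_grow {𝒢 : TemporalGraph V} (hc : 𝒢.IsConnectedTG) (u : V) {s k : ℕ}
    (hs : 1 ≤ s) (hk : s + k ≤ 𝒢.lifetime) :
    min (Fintype.card V) (k + 1) ≤ (𝒢.reachFrom {u} s k).card := by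
  have hu : ∀ k, u ∈ 𝒢.reachFrom {u} s k := fun k =>
    mem_reachFrom.2 ⟨u, by simp, rch_refl 𝒢 s u k⟩
  exact card_grow (U := Finset.univ) ⟨u, hu 0⟩ (reachFrom_mono_succ 𝒢 {u} s)
    (fun i hi h => reachFrom_ne_succ hc hs (by omega) h (hu i)) k le_rfl

/-- If some reached orbit has, in the current snapshot, an edge to an unreached orbit, then by
symmetry so does the reached vertex of that orbit; hence the number of reached orbits grows
by one at each step until all of them are reached. -/
lemma exists_reach_orbit {𝒢 : TemporalGraph V} (hc : 𝒢.IsConnectedTG) (v w : V) {s : ℕ}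
    (hs : 1 ≤ s) (hk : s + 𝒢.orbitNumber ≤ 𝒢.lifetime) :
    ∃ w' ∈ 𝒢.orbit w, 𝒢.Rch s 𝒢.orbitNumber v w' := by
  classical
  let f : ℕ → Finset (Set V) := fun k => (𝒢.reachFrom {v} s k).image 𝒢.orbit
  let U : Finset (Set V) := Finset.univ.image 𝒢.orbit
  have hUc : U.card = 𝒢.orbitNumber := by
    rw [orbitNumber, ← Set.ncard_coe_finset]
    simp [U]
  have hvk : ∀ k, v ∈ 𝒢.reachFrom {v} s k := fun k =>
    mem_reachFrom.2 ⟨v, by simp, rch_refl 𝒢 s v k⟩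
  have hU : ∀ k, f k ⊆ U := fun k => Finset.image_subset_image (Finset.subset_univ _)
  have key := card_grow (f := f) (U := U) (K := 𝒢.orbitNumber)
    ⟨_, Finset.mem_image_of_mem _ (hvk 0)⟩
    (fun k => Finset.image_subset_image (reachFrom_mono_succ 𝒢 {v} s k))
    (fun k hkr h heq => by
      obtain ⟨b, hb⟩ : ∃ b, 𝒢.orbit b ∉ f k := by
        by_contra! hall
        refine h (Finset.Subset.antisymm (hU k) fun T hT => ?_)
        obtain ⟨b, -, rfl⟩ := Finset.mem_image.1 hT
        exact hall b
      obtain ⟨x, hx, y, hy, hxy⟩ := exists_adj_of_connected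
        (hc (s + k) (by omega) (by omega)) (P := {z | 𝒢.orbit z ∈ f k})
        (a := v) (b := b) (Finset.mem_image_of_mem _ (hvk k)) hb
      obtain ⟨x', hx', hxx⟩ := Finset.mem_image.1 hx
      obtain ⟨σ, hσ, rfl⟩ := orbit_eq_iff.1 hxx
      have hadj := (hσ (s + k) (by omega) (by omega) x y).1 hxy
      refine hy ?_
      rw [Set.mem_ofPred_eq, heq]
      refine Finset.mem_image.2 ⟨σ y, ?_, orbit_eq_iff.2 ⟨σ, hσ, rfl⟩⟩
      obtain ⟨z, hz, hzx⟩ := mem_reachFrom.1 hx'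
      exact mem_reachFrom.2 ⟨z, hz, σ x, hzx, Or.inr hadj⟩) 𝒢.orbitNumber le_rfl
  have hfU : f 𝒢.orbitNumber = U :=
    Finset.eq_of_subset_of_card_le (hU _) (by omega)
  have hw : 𝒢.orbit w ∈ f 𝒢.orbitNumber := by
    rw [hfU]
    exact Finset.mem_image_of_mem _ (Finset.mem_univ w)
  obtain ⟨w', hw', hww⟩ := Finset.mem_image.1 hw
  obtain ⟨z, hz, hzw⟩ := mem_reachFrom.1 hw'
  rw [Finset.mem_singleton] at hz
  subst hz
  exact ⟨w', orbit_eq_iff.1 hww, hzw⟩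

/-! ### Transfer of densities between orbits -/

/-- The density of `A` in the orbit of `x` is at most the density, in the orbit of `y`, of the
set reached from `A` within `r` steps. -/
lemma density_le {𝒢 : TemporalGraph V} (hc : 𝒢.IsConnectedTG) (A : Finset V) (x y : V) {s : ℕ}
    (hs : 1 ≤ s) (hk : s + 𝒢.orbitNumber ≤ 𝒢.lifetime) :
    (𝒢.inOrb A x).card * (𝒢.inOrb Finset.univ y).card ≤
      (𝒢.inOrb (𝒢.reachFrom A s 𝒢.orbitNumber) y).card * (𝒢.inOrb Finset.univ x).card := by
  classical
  set r := 𝒢.orbitNumber with hr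
  set T := 𝒢.inOrb Finset.univ x with hT
  set S := 𝒢.inOrb Finset.univ y with hS
  have horb : ∀ {σ : Equiv.Perm V}, 𝒢.IsAut σ → ∀ {a b : V}, a ∈ 𝒢.orbit b → σ a ∈ 𝒢.orbit b :=
    fun hσ _ _ h => mem_orbit_trans ⟨_, hσ, rfl⟩ h
  -- one inequality between degrees suffices, since it applies to both orders of two vertices
  have hdle : ∀ a ∈ T, ∀ b ∈ T, (S.bipartiteAbove (𝒢.Rch s r) a).card ≤
      (S.bipartiteAbove (𝒢.Rch s r) b).card := by
    intro a ha b hb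
    rw [hT, mem_inOrb] at ha hb
    obtain ⟨σ, hσ, rfl⟩ := mem_orbit_trans hb.2 (mem_orbit_symm ha.2)
    refine Finset.card_le_card_of_injOn σ (fun w hw => ?_) σ.injective.injOn
    simp only [Finset.coe_filter, Finset.bipartiteAbove, Set.mem_ofPred_eq, hS, mem_inOrb,
      Finset.mem_univ, true_and] at hw ⊢
    exact ⟨horb hσ hw.1, hw.2.map hσ hs hk⟩
  have hele : ∀ a ∈ S, ∀ b ∈ S, (T.bipartiteBelow (𝒢.Rch s r) a).card ≤
      (T.bipartiteBelow (𝒢.Rch s r) b).card := by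
    intro a ha b hb
    rw [hS, mem_inOrb] at ha hb
    obtain ⟨σ, hσ, rfl⟩ := mem_orbit_trans hb.2 (mem_orbit_symm ha.2)
    refine Finset.card_le_card_of_injOn σ (fun w hw => ?_) σ.injective.injOn
    simp only [Finset.coe_filter, Finset.bipartiteBelow, Set.mem_ofPred_eq, hT, mem_inOrb,
      Finset.mem_univ, true_and] at hw ⊢
    exact ⟨horb hσ hw.1, hw.2.map hσ hs hk⟩
  have hxT : x ∈ T := mem_inOrb.2 ⟨Finset.mem_univ _, mem_orbit_self 𝒢 x⟩
  have hyS : y ∈ S := mem_inOrb.2 ⟨Finset.mem_univ _, mem_orbit_self 𝒢 y⟩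
  set d := (S.bipartiteAbove (𝒢.Rch s r) x).card with hd
  set e := (T.bipartiteBelow (𝒢.Rch s r) y).card with he
  have hdpos : 0 < d := by
    obtain ⟨w, hw, hxw⟩ := exists_reach_orbit hc x y hs hk
    refine Finset.card_pos.2 ⟨w, ?_⟩
    simp only [Finset.bipartiteAbove, Finset.mem_filter, hS, mem_inOrb]
    exact ⟨⟨Finset.mem_univ _, hw⟩, hxw⟩
  have h1 : S.card * e ≤ T.card * d := by
    have h := Finset.sum_card_bipartiteAbove_eq_sum_card_bipartiteBelow (s := T) (t := S)
      (𝒢.Rch s r)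
    calc S.card * e ≤ ∑ b ∈ S, (T.bipartiteBelow (𝒢.Rch s r) b).card := by
            rw [← smul_eq_mul]
            exact Finset.card_nsmul_le_sum _ _ _ fun b hb => hele y hyS b hb
      _ = ∑ a ∈ T, (S.bipartiteAbove (𝒢.Rch s r) a).card := h.symm
      _ ≤ T.card * d := by
            rw [← smul_eq_mul]
            exact Finset.sum_le_card_nsmul _ _ _ fun a ha => hdle a ha x hxT
  have h2 : (𝒢.inOrb A x).card * d ≤ (𝒢.inOrb (𝒢.reachFrom A s r) y).card * e := by
    refine Finset.card_mul_le_card_mul (𝒢.Rch s r) (fun a ha => ?_) (fun b hb => ?_)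
    · rw [mem_inOrb] at ha
      refine (hdle x hxT a (mem_inOrb.2 ⟨Finset.mem_univ _, ha.2⟩)).trans
        (Finset.card_le_card fun w hw => ?_)
      simp only [Finset.bipartiteAbove, Finset.mem_filter, hS, mem_inOrb] at hw ⊢
      exact ⟨⟨mem_reachFrom.2 ⟨a, ha.1, hw.2⟩, hw.1.2⟩, hw.2⟩
    · rw [mem_inOrb] at hb
      refine le_trans (Finset.card_le_card fun w hw => ?_)
        (hele b (mem_inOrb.2 ⟨Finset.mem_univ _, hb.2⟩) y hyS)
      simp only [Finset.bipartiteBelow, Finset.mem_filter, hT, mem_inOrb] at hw ⊢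
      exact ⟨⟨Finset.mem_univ _, hw.1.2⟩, hw.2⟩
  refine Nat.le_of_mul_le_mul_right ?_ hdpos
  calc (𝒢.inOrb A x).card * S.card * d = ((𝒢.inOrb A x).card * d) * S.card := by ring
    _ ≤ ((𝒢.inOrb (𝒢.reachFrom A s r) y).card * e) * S.card := Nat.mul_le_mul_right _ h2
    _ = (𝒢.inOrb (𝒢.reachFrom A s r) y).card * (S.card * e) := by ring
    _ ≤ (𝒢.inOrb (𝒢.reachFrom A s r) y).card * (T.card * d) := Nat.mul_le_mul_left _ h1
    _ = _ := by ring

/-- A system of representatives of the orbits, used to split cardinalities orbit by orbit. -/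
lemma exists_orbit_reps (𝒢 : TemporalGraph V) :
    ∃ R : Finset V, ∀ A : Finset V, A.card = ∑ x ∈ R, (𝒢.inOrb A x).card := by
  classical
  obtain ⟨R, -, hinj, hR⟩ := Finset.exists_subset_injOn_image_eq_of_surjOn
    (s := Set.univ) (t := Finset.univ.image 𝒢.orbit) (f := 𝒢.orbit)
    (fun T hT => by simpa using hT)
  refine ⟨R, fun A => ?_⟩
  rw [Finset.card_eq_sum_card_fiberwise (f := 𝒢.orbit) (t := R.image 𝒢.orbit) (s := A)
    (fun a _ => by rw [hR]; simp), Finset.sum_image hinj]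
  refine Finset.sum_congr rfl fun x _ => congrArg Finset.card ?_
  ext v
  simp [mem_inOrb, orbit_eq_iff]

lemma density_orbit_le_total {𝒢 : TemporalGraph V} (hc : 𝒢.IsConnectedTG) (A : Finset V) (y : V)
    {s : ℕ} (hs : 1 ≤ s) (hk : s + 𝒢.orbitNumber ≤ 𝒢.lifetime) :
    (𝒢.inOrb A y).card * Fintype.card V ≤
      (𝒢.reachFrom A s 𝒢.orbitNumber).card * (𝒢.inOrb Finset.univ y).card := by
  obtain ⟨R, hR⟩ := exists_orbit_reps 𝒢
  rw [← Finset.card_univ, hR Finset.univ, hR (𝒢.reachFrom _ _ _), Finset.mul_sum, Finset.sum_mul]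
  exact Finset.sum_le_sum fun x _ => density_le hc A y x hs hk

lemma density_total_le_orbit {𝒢 : TemporalGraph V} (hc : 𝒢.IsConnectedTG) (A : Finset V) (y : V)
    {s : ℕ} (hs : 1 ≤ s) (hk : s + 𝒢.orbitNumber ≤ 𝒢.lifetime) :
    A.card * (𝒢.inOrb Finset.univ y).card ≤
      (𝒢.inOrb (𝒢.reachFrom A s 𝒢.orbitNumber) y).card * Fintype.card V := by
  obtain ⟨R, hR⟩ := exists_orbit_reps 𝒢
  rw [← Finset.card_univ, hR Finset.univ, hR A, Finset.mul_sum, Finset.sum_mul]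
  exact Finset.sum_le_sum fun x _ => density_le hc A x y hs hk

/-! ### The two bounds -/

lemma reach_bound_total {𝒢 : TemporalGraph V} (hc : 𝒢.IsConnectedTG) (u y : V) {t m h : ℕ}
    (ht : 1 ≤ t) (hk : t + (m + 𝒢.orbitNumber) ≤ 𝒢.lifetime)
    (hh : h ≤ (𝒢.inOrb Finset.univ y).card)
    (hm : h * Fintype.card V ≤ m * (𝒢.inOrb Finset.univ y).card) :
    h ≤ (𝒢.inOrb (𝒢.reachFrom {u} t (m + 𝒢.orbitNumber)) y).card := by
  have hn : 0 < Fintype.card V := Fintype.card_pos_iff.2 ⟨u⟩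
  refine le_trans ?_ (Finset.card_le_card (inOrb_mono (reachFrom_reachFrom 𝒢 {u} t m _) y))
  have h1 := card_reachFrom_grow hc u ht (k := m) (by omega)
  have h2 := density_total_le_orbit hc (𝒢.reachFrom {u} t m) y (s := t + m) (by omega) (by omega)
  refine Nat.le_of_mul_le_mul_right (le_trans ?_ h2) hn
  rcases le_total (Fintype.card V) (m + 1) with h3 | h3
  · rw [min_eq_left h3] at h1
    calc h * Fintype.card V ≤ (𝒢.inOrb Finset.univ y).card * Fintype.card V :=
          Nat.mul_le_mul_right _ hh
      _ = Fintype.card V * (𝒢.inOrb Finset.univ y).card := Nat.mul_comm _ _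
      _ ≤ _ := Nat.mul_le_mul_right _ h1
  · rw [min_eq_right h3] at h1
    exact hm.trans (Nat.mul_le_mul_right _ (by omega))

lemma reach_bound_orbits {𝒢 : TemporalGraph V} (hc : 𝒢.IsConnectedTG) (u y : V) {t : ℕ}
    (ht : 1 ≤ t) : ∀ h : ℕ, t + h * (2 * 𝒢.orbitNumber + 1) ≤ 𝒢.lifetime →
    h ≤ (𝒢.inOrb Finset.univ y).card →
    h ≤ (𝒢.inOrb (𝒢.reachFrom {u} t (h * (2 * 𝒢.orbitNumber + 1))) y).card := by
  intro h
  induction h with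
  | zero => intros; exact Nat.zero_le _
  | succ h ih =>
    intro hk hh
    have hn : 0 < Fintype.card V := Fintype.card_pos_iff.2 ⟨u⟩
    set r := 𝒢.orbitNumber with hr
    set a := h * (2 * r + 1) with ha
    have hexp : (h + 1) * (2 * r + 1) = (a + r + 1) + r := by rw [ha]; ring
    rw [hexp] at hk ⊢
    have h0 := ih (by omega) (by omega)
    have h1 := density_orbit_le_total hc (𝒢.reachFrom {u} t a) y (s := t + a) (by omega)
      (by omega)
    have h2 := Finset.card_le_card (reachFrom_reachFrom 𝒢 {u} t a r)
    have h3 := density_total_le_orbit hc (𝒢.reachFrom {u} t (a + r + 1)) y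
      (s := t + (a + r + 1)) (by omega) (by omega)
    have h4 := Finset.card_le_card
      (inOrb_mono (𝒢 := 𝒢) (reachFrom_reachFrom 𝒢 {u} t (a + r + 1) r) y)
    rw [← hr] at h1 h3
    set S := (𝒢.inOrb Finset.univ y).card
    refine le_trans ?_ h4
    refine Nat.lt_of_mul_lt_mul_right (a := Fintype.card V) (lt_of_lt_of_le ?_ h3)
    have hu : u ∈ 𝒢.reachFrom {u} t (a + r) :=
      mem_reachFrom.2 ⟨u, by simp, rch_refl 𝒢 t u _⟩
    have hsub := reachFrom_mono_succ 𝒢 {u} t (a + r)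
    by_cases hfull : 𝒢.reachFrom {u} t (a + r) = Finset.univ
    · have h5 := Finset.card_le_card hsub
      rw [hfull, Finset.card_univ] at h5
      calc h * Fintype.card V < S * Fintype.card V := Nat.mul_lt_mul_of_pos_right (by omega) hn
        _ = Fintype.card V * S := Nat.mul_comm _ _
        _ ≤ _ := Nat.mul_le_mul_right _ h5
    · have h5 := Finset.card_lt_card (hsub.ssubset_of_ne
        (reachFrom_ne_succ hc ht (by omega) hfull hu))
      calc h * Fintype.card V ≤ _ := Nat.mul_le_mul_right _ h0
        _ ≤ _ := h1
        _ ≤ (𝒢.reachFrom {u} t (a + r)).card * S := Nat.mul_le_mul_right _ h2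
        _ < _ := Nat.mul_lt_mul_of_pos_right h5 (by omega)

end TemporalGraph

/-- Lemma 4.3: there is a universal constant `C > 0` such that for any
connected temporal graph with `n` vertices and orbit number `r`, any orbit `S`, any
`h ≤ |S|`, any `u ∈ S` and suitable start time `t`, there is a set `X ⊆ S` of exactly
`h` vertices each reachable from `u` within `C·(min{h·n/|S|, h·r} + r)` time steps. -/
theorem reach_h_vertices_in_orbit :
    ∃ C : ℝ, 0 < C ∧
      ∀ (V : Type) [Fintype V], ∀ 𝒢 : TemporalGraph V, 𝒢.IsConnectedTG →
      ∀ n r : ℕ, n = Fintype.card V → r = 𝒢.orbitNumber →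
      ∀ S : Set V, 𝒢.IsOrbit S →
      ∀ h : ℕ, h ≤ S.ncard →
      ∀ u ∈ S, ∀ t : ℕ, 1 ≤ t →
      (t : ℝ) + C * (min (((h : ℝ) * n) / (S.ncard : ℝ)) ((h : ℝ) * r) + r)
          ≤ (𝒢.lifetime : ℝ) →
      ∃ X ⊆ S, X.ncard = h ∧
        ∀ u' ∈ X, ∃ t' : ℕ, t ≤ t' ∧
          (t' : ℝ) - (t : ℝ)
            ≤ C * (min (((h : ℝ) * n) / (S.ncard : ℝ)) ((h : ℝ) * r) + r) ∧
          ∃ W : ℕ → V, 𝒢.IsWalk W t t' ∧ W t = u ∧ W t' = u' := by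
  refine ⟨3, by norm_num, ?_⟩
  intro V _ 𝒢 hc n r hn hr S hS h hh u hu t ht hlife
  subst hn hr
  obtain ⟨y, rfl⟩ := hS
  have hScard : (𝒢.orbit y).ncard = (𝒢.inOrb Finset.univ y).card := by
    rw [← Set.ncard_coe_finset]
    congr 1
    ext v
    simp [TemporalGraph.mem_inOrb]
  rw [hScard] at hh hlife ⊢
  set b : ℝ := 3 * (min (((h : ℝ) * (Fintype.card V : ℕ)) / ((𝒢.inOrb Finset.univ y).card : ℝ))
    ((h : ℝ) * (𝒢.orbitNumber : ℕ)) + (𝒢.orbitNumber : ℕ)) with hb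
  have hr1 : 1 ≤ 𝒢.orbitNumber := by
    rw [TemporalGraph.orbitNumber, Nat.one_le_iff_ne_zero]
    exact Set.ncard_ne_zero_of_mem (Set.mem_range_self u)
  have hr1' : (1 : ℝ) ≤ 𝒢.orbitNumber := by exact_mod_cast hr1
  have hSpos : 0 < (𝒢.inOrb Finset.univ y).card :=
    Finset.card_pos.2 ⟨u, TemporalGraph.mem_inOrb.2 ⟨Finset.mem_univ u, hu⟩⟩
  have hSpos' : (0 : ℝ) < (𝒢.inOrb Finset.univ y).card := by exact_mod_cast hSpos
  obtain ⟨K, hKb, hK⟩ : ∃ K : ℕ, (K : ℝ) ≤ b ∧ (t + K ≤ 𝒢.lifetime →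
      h ≤ (𝒢.inOrb (𝒢.reachFrom {u} t K) y).card) := by
    -- the summand `r ≥ 1` of the bound absorbs the rounding up of `h * n / |S|`
    rcases le_total (((h : ℝ) * (Fintype.card V : ℕ)) / ((𝒢.inOrb Finset.univ y).card : ℝ))
      ((h : ℝ) * (𝒢.orbitNumber : ℕ)) with hle | hle
    · rw [min_eq_left hle] at hb
      set q : ℝ := ((h : ℝ) * (Fintype.card V : ℕ)) / ((𝒢.inOrb Finset.univ y).card : ℝ) with hq
      have hq0 : 0 ≤ q := by positivity
      refine ⟨⌈q⌉₊ + 𝒢.orbitNumber, ?_, fun hl => ?_⟩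
      · have := Nat.ceil_lt_add_one hq0
        push_cast
        linarith
      · refine TemporalGraph.reach_bound_total hc u y ht hl hh ?_
        have h1 : (h : ℝ) * (Fintype.card V : ℕ) ≤
            (⌈q⌉₊ : ℝ) * ((𝒢.inOrb Finset.univ y).card : ℝ) :=
          (div_le_iff₀ hSpos').1 (Nat.le_ceil q)
        exact_mod_cast h1
    · rw [min_eq_right hle] at hb
      refine ⟨h * (2 * 𝒢.orbitNumber + 1), ?_, fun hl =>
        TemporalGraph.reach_bound_orbits hc u y ht h hl hh⟩
      push_cast
      have : (0 : ℝ) ≤ h := Nat.cast_nonneg h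
      nlinarith
  have hl : t + K ≤ 𝒢.lifetime := by
    have : (t : ℝ) + K ≤ 𝒢.lifetime := by linarith
    exact_mod_cast this
  obtain ⟨X, hX, hXc⟩ := Finset.exists_subset_card_eq (hK hl)
  refine ⟨X, fun v hv => (TemporalGraph.mem_inOrb.1 (hX hv)).2, by
    rw [Set.ncard_coe_finset, hXc], fun v hv => ⟨t + K, by omega, by push_cast; linarith, ?_⟩⟩
  obtain ⟨w, hw, hwv⟩ := TemporalGraph.mem_reachFrom.1 (TemporalGraph.mem_inOrb.1 (hX hv)).1
  rw [Finset.mem_singleton] at hw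
  subst hw
  exact hwv.exists_walk ht hl
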